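/- Let q be an odd prime power with q ≡ 1 (mod 4), let k be a divisor of q−1 with 3 < k < q−1, set e = (q−1)/k, and assume e is even and k < p, where p is the characteristic of F_q. If (q,k) gives a 3-design, i.e., the PSL(2,q)-orbit of B is the block set of a 3-(q+1, k, λ) design for some positive integer λ, then λ = (k−1)(k−2)/4. -/

import Mathlib

/-!
Setting: `F` is a finite field of order `q`. The projective line `PG(1,q)` is
modelled as `Projectivization F (Fin 2 → F)`. Since scalar matrices act trivially
on the projective line, the images of a set under all elements of `SL(2,F)` form
exactly its `PSL(2,F)`-orbit; `mapSL g` is the map of the projective line induced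
by `g : SL(2,F)`. For `k ∣ q - 1`, the unique subgroup of order `k` of `Fˣ` is the
set of `k`-th roots of unity `{x : F | x ^ k = 1}`, embedded into the projective
line via `x ↦ [x : 1]`. `(q, k)` gives a 3-design iff there is `lam > 0` such that
every 3-subset of the projective line lies in exactly `lam` blocks of the orbit.
-/

noncomputable section

open Matrix

/-- The point at infinity `[1 : 0]` of the projective line over `F`. -/
def inftyPt (F : Type) [Field F] : Projectivization F (Fin 2 → F) :=
  Projectivization.mk F ![1, 0] (by
    intro h
    simpa using congrFun h 0)

/-- The embedding of `F` into the projective line, `x ↦ [x : 1]`. -/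
def embedPt (F : Type) [Field F] (x : F) : Projectivization F (Fin 2 → F) :=
  Projectivization.mk F ![x, 1] (by
    intro h
    simpa using congrFun h 1)

/-- The action of `g : SL(2,F)` on the projective line (as linear fractional
transformation). -/
def mapSL {F : Type} [Field F] (g : Matrix.SpecialLinearGroup (Fin 2) F) :
    Projectivization F (Fin 2 → F) → Projectivization F (Fin 2 → F) :=
  Projectivization.map (Matrix.SpecialLinearGroup.toLin' g : (Fin 2 → F) →ₗ[F] (Fin 2 → F))
    (Matrix.SpecialLinearGroup.toLin' g).injective

/-- The starter block: the unique subgroup of order `k` of `Fˣ` (the `k`-th roots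
of unity, for `k ∣ q - 1`), regarded as a subset of the projective line. -/
def starterB (F : Type) [Field F] (k : ℕ) : Set (Projectivization F (Fin 2 → F)) :=
  embedPt F '' {x : F | x ^ k = 1}

/-- The `PSL(2,F)`-orbit `GB` of the starter block. -/
def designBlocks (F : Type) [Field F] (k : ℕ) :
    Set (Set (Projectivization F (Fin 2 → F))) :=
  {S | ∃ g : Matrix.SpecialLinearGroup (Fin 2) F, S = mapSL g '' starterB F k}

/-- `GB` is the block set of a `3-(q+1, k, lam)` design: `lam` is positive and every
3-subset of the projective line is contained in exactly `lam` blocks. -/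
def isThreeDesign (F : Type) [Field F] (k lam : ℕ) : Prop :=
  0 < lam ∧
    ∀ T : Finset (Projectivization F (Fin 2 → F)), T.card = 3 →
      {S ∈ designBlocks F k | (T : Set (Projectivization F (Fin 2 → F))) ⊆ S}.ncard = lam

/-- `(q, k)` gives a 3-design. -/
def gives3Design (F : Type) [Field F] (k : ℕ) : Prop :=
  ∃ lam : ℕ, isThreeDesign F k lam

/-!
Counting incident pairs (`3`-subset, block) and applying orbit-stabilizer gives
`C(q + 1, 3) * lam * |Stab B| = |SL(2, q)| * C(k, 3)`, so everything rests on `|Stab B| = 4 * k`.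
If `x ↦ (a * x + b) / (c * x + d)` stabilizes the `k`-th roots of unity `B`, then
`(a * X + b) ^ k - (c * X + d) ^ k` is a multiple of `X ^ k - 1`, hence all its middle coefficients
vanish. Write `k - 1 = p ^ v * m` with `p ∤ m`. The coefficients of `X` and `X ^ (p ^ v + 1)` carry
binomial factors prime to `p`; if `a`, `b`, `c`, `d` are all nonzero, then comparing them gives
`b ^ (k * p ^ v) = d ^ (k * p ^ v)`, hence `b ^ k = d ^ k` and `a * d = b * c`, which is absurd.
So the stabilizer is monomial: it consists of the `2 * k` matrices `diag(u, u⁻¹)` with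
`u ^ (2 * k) = 1` and of their products with `!![0, i; i, 0]`, where `i ^ 2 = -1`.
-/

open Polynomial MulAction
open Matrix.SpecialLinearGroup (diag2 diag2_coe' toGL_injective range_toGL)
open scoped Pointwise MatrixGroups

section OrbitDesign

theorem choose_mul_eq_ncard_mul_choose {P : Type*} [Finite P] {blocks : Set (Set P)} {t k lam : ℕ}
    (hblocks : ∀ S ∈ blocks, S.ncard = k)
    (hdesign : ∀ T : Finset P, T.card = t → {S ∈ blocks | (T : Set P) ⊆ S}.ncard = lam) :
    (Nat.card P).choose t * lam = blocks.ncard * k.choose t := by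
  classical
  have := Fintype.ofFinite P
  have hcount := Finset.card_mul_eq_card_mul (fun (T : Finset P) (S : Set P) ↦ (T : Set P) ⊆ S)
    (s := Finset.univ.powersetCard t) (t := blocks.toFinset) (m := lam) (n := k.choose t) ?_ ?_
  · simpa [Set.ncard_eq_toFinset_card'] using hcount
  · intro T hT
    rw [← hdesign T (Finset.mem_powersetCard.1 hT).2, ← Set.ncard_coe_finset]
    congr 1
    ext S
    simp [Finset.bipartiteAbove]
  · intro S hS
    rw [← hblocks S (by simpa using hS), Set.ncard_eq_toFinset_card', ← Finset.card_powersetCard]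
    congr 1
    ext T
    simp [Finset.bipartiteBelow, Finset.mem_powersetCard, Finset.subset_iff, Set.subset_def,
      and_comm]

theorem choose_mul_card_stabilizer_eq_card_mul_choose (G : Type*) {P : Type*} [Group G]
    [MulAction G P] [Finite P] {B : Set P} {t lam : ℕ}
    (hdesign : ∀ T : Finset P, T.card = t →
      {S ∈ orbit G B | (T : Set P) ⊆ S}.ncard = lam) :
    (Nat.card P).choose t * lam * Nat.card (stabilizer G B) =
      Nat.card G * B.ncard.choose t := by
  have hblocks : ∀ S ∈ orbit G B, S.ncard = B.ncard := by
    rintro _ ⟨g, rfl⟩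
    exact Set.ncard_smul_set g B
  have horbit : (orbit G B).ncard * Nat.card (stabilizer G B) = Nat.card G := by
    rw [← Nat.card_coe_set_eq, ← Nat.card_prod]
    exact Nat.card_congr (orbitProdStabilizerEquivGroup G B)
  rw [choose_mul_eq_ncard_mul_choose hblocks hdesign, ← horbit, mul_right_comm]

end OrbitDesign

section CardSpecialLinearGroup

theorem card_specialLinearGroup_mul_card_units (n R : Type*) [Fintype n] [DecidableEq n]
    [Nonempty n] [CommRing R] :
    Nat.card (Matrix.SpecialLinearGroup n R) * Nat.card Rˣ = Nat.card (GL n R) := by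
  let det : GL n R →* Rˣ := Matrix.GeneralLinearGroup.det
  have hker : Nat.card (Matrix.SpecialLinearGroup n R) = Nat.card det.ker := by
    rw [← Nat.card_range_of_injective toGL_injective, range_toGL]
    rfl
  have hindex : det.ker.index = Nat.card Rˣ := by
    rw [Subgroup.index_ker, MonoidHom.range_eq_top.2 Matrix.GeneralLinearGroup.det_surjective,
      Subgroup.card_top]
  rw [hker, ← hindex, Subgroup.card_mul_index]

theorem card_specialLinearGroup_fin_two (F : Type*) [Field F] [Finite F] :
    Nat.card SL(2, F) = (Nat.card F + 1) * Nat.card F * (Nat.card F - 1) := by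
  have := Fintype.ofFinite F
  have hGL := card_specialLinearGroup_mul_card_units (Fin 2) F
  rw [Matrix.card_GL_field, Nat.card_units, Fin.prod_univ_two, ← Nat.card_eq_fintype_card] at hGL
  obtain ⟨r, hr⟩ : ∃ r, Nat.card F = r + 1 :=
    Nat.exists_eq_add_one.2 Nat.card_pos
  have hr0 : 0 < r := by
    have := Finite.one_lt_card (α := F)
    omega
  rw [hr] at hGL ⊢
  have h₀ : (r + 1) ^ 2 - 1 = (r + 2) * r := Nat.sub_eq_of_eq_add (by ring)
  have h₁ : (r + 1) ^ 2 - (r + 1) = (r + 1) * r := Nat.sub_eq_of_eq_add (by ring)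
  simp only [Fin.val_zero, Fin.val_one, pow_zero, pow_one, h₀, h₁, Nat.add_sub_cancel] at hGL ⊢
  apply Nat.eq_of_mul_eq_mul_right hr0
  rw [hGL]
  ring

end CardSpecialLinearGroup

section Binomial

variable {p : ℕ} [hp : Fact p.Prime]

theorem choose_prime_pow_mul_prime_pow_modEq (v m : ℕ) :
    (p ^ v * m).choose (p ^ v) ≡ m [MOD p] := by
  induction v with
  | zero => simp [Nat.ModEq.refl]
  | succ v ih =>
    refine Choose.choose_modEq_choose_mod_mul_choose_div_nat.trans ?_
    have hp0 := hp.out.pos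
    rw [pow_succ', mul_assoc]
    simpa [hp0] using ih

theorem exists_not_dvd_choose_prime_pow_add_one {k : ℕ} (hk : 1 < k) (hpk : ¬ p ∣ k)
    (hne : ∀ n, k ≠ p ^ n + 1) : ∃ v, p ^ v + 1 < k ∧ ¬ p ∣ k.choose (p ^ v + 1) := by
  obtain ⟨v, m, hpm, hm⟩ :=
    Nat.exists_eq_pow_mul_and_not_dvd (Nat.sub_ne_zero_of_lt hk) p hp.out.ne_one
  obtain rfl : k = p ^ v * m + 1 := by omega
  refine ⟨v, ?_, fun hdvd ↦ ?_⟩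
  · have hm0 : 0 < m := Nat.pos_of_ne_zero fun h ↦ hpm (h ▸ dvd_zero p)
    have hle : p ^ v ≤ p ^ v * m := Nat.le_mul_of_pos_right _ hm0
    have := hne v
    omega
  · have hprod : p ∣ (p ^ v * m + 1) * (p ^ v * m).choose (p ^ v) := by
      rw [Nat.add_one_mul_choose_eq]
      exact hdvd.mul_right _
    refine (hp.out.dvd_mul.1 hprod).elim hpk fun h ↦ hpm ?_
    exact ((choose_prime_pow_mul_prime_pow_modEq v m).dvd_iff dvd_rfl).1 h

end Binomial

section RootsOfUnity

theorem exists_isPrimitiveRoot_of_dvd_card_sub_one (K : Type*) [Field K] [Finite K] {n : ℕ}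
    (hn : n ∣ Nat.card K - 1) : ∃ ζ : K, IsPrimitiveRoot ζ n := by
  have hcard : 0 < Nat.card K - 1 := Nat.sub_pos_of_lt Finite.one_lt_card
  have : NeZero n := ⟨ne_zero_of_dvd_ne_zero hcard.ne' hn⟩
  rw [← card_rootsOfUnity_eq_iff_exists_isPrimitiveRoot]
  have hker : rootsOfUnity n K = (powMonoidHom n : Kˣ →* Kˣ).ker := rfl
  rw [hker, IsCyclic.card_powMonoidHom_ker, Nat.card_units, Nat.gcd_eq_right hn]

theorem coeff_C_mul_X_add_C_pow {R : Type*} [CommSemiring R] (a b : R) (n j : ℕ) :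
    ((C a * X + C b) ^ n).coeff j = a ^ j * b ^ (n - j) * n.choose j := by
  have hcomp : (C a * X + C b) ^ n = ((X + C b) ^ n).comp (C a * X) := by simp
  rw [hcomp, comp_C_mul_X_coeff, coeff_X_add_C_pow]
  ring

theorem coeff_eq_zero_of_eval_eq_zero_of_pow_eq_one {R : Type*} [CommRing R] [IsDomain R]
    {ζ : R} {n : ℕ} (hζ : IsPrimitiveRoot ζ n) {f : R[X]} (hdeg : f.natDegree ≤ n)
    (hf : ∀ x, x ^ n = 1 → f.eval x = 0) {j : ℕ} (hj : 0 < j) (hjn : j < n) : f.coeff j = 0 := by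
  have hfactor : f = C (f.coeff n) * (X ^ n - 1) := by
    refine eq_of_degree_sub_lt_of_eval_finset_eq (nthRootsFinset n (1 : R)) ?_ fun x hx ↦ ?_
    · rw [hζ.card_nthRootsFinset, degree_lt_iff_coeff_zero]
      intro m hm
      rcases hm.eq_or_lt with rfl | hm
      · simp [coeff_one, (hj.trans hjn).ne']
      · simp [coeff_one, coeff_X_pow, hm.ne', (hj.trans (hjn.trans hm)).ne',
          coeff_eq_zero_of_natDegree_lt (hdeg.trans_lt hm)]
    · have hx := (mem_nthRootsFinset (hj.trans hjn) _).1 hx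
      simp [hf x hx, hx]
  rw [hfactor]
  simp [coeff_one, coeff_X_pow, hj.ne', hjn.ne]

variable {F : Type*} [Field F] {k : ℕ} {a b c d : F}

theorem coeffs_eq_of_linear_pow_eq_on_rootsOfUnity {ζ : F} (hζ : IsPrimitiveRoot ζ k)
    (h : ∀ x : F, x ^ k = 1 → (a * x + b) ^ k = (c * x + d) ^ k) {j : ℕ} (hj : 0 < j)
    (hjk : j < k) (hchoose : (k.choose j : F) ≠ 0) :
    a ^ j * b ^ (k - j) = c ^ j * d ^ (k - j) := by
  have hdeg (u v : F) : ((C u * X + C v) ^ k).natDegree ≤ k := by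
    simpa using natDegree_pow_le_of_le k (natDegree_linear_le (a := u) (b := v))
  have hcoeff : ((C a * X + C b) ^ k - (C c * X + C d) ^ k).coeff j = 0 :=
    coeff_eq_zero_of_eval_eq_zero_of_pow_eq_one hζ
      (natDegree_sub_le_of_le (hdeg a b) (hdeg c d) |>.trans (max_self k).le)
      (fun x hx ↦ by simp [h x hx]) hj hjk
  rw [coeff_sub, coeff_C_mul_X_add_C_pow, coeff_C_mul_X_add_C_pow, sub_eq_zero] at hcoeff
  exact mul_right_cancel₀ hchoose hcoeff

theorem mul_eq_mul_of_coeffs_eq (p : ℕ) [Fact p.Prime] [CharP F p] {v : ℕ}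
    (hv : p ^ v + 1 ≤ k) (ha : a ≠ 0) (hb : b ≠ 0) (hd : d ≠ 0)
    (h₁ : a * b ^ (k - 1) = c * d ^ (k - 1))
    (h₂ : a ^ (p ^ v + 1) * b ^ (k - (p ^ v + 1)) = c ^ (p ^ v + 1) * d ^ (k - (p ^ v + 1))) :
    a * d = b * c := by
  have hc : c ≠ 0 := by
    rintro rfl
    exact mul_ne_zero ha (pow_ne_zero _ hb) (by rw [h₁, zero_mul])
  obtain ⟨l, rfl⟩ : ∃ l, k = l + (p ^ v + 1) := Nat.exists_eq_add_of_le' hv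
  rw [Nat.add_sub_cancel] at h₂
  simp only [← add_assoc, Nat.add_sub_cancel] at h₁
  have hpow : (b ^ (l + p ^ v + 1)) ^ p ^ v = (d ^ (l + p ^ v + 1)) ^ p ^ v := by
    have h₁' : a ^ (p ^ v + 1) * b ^ l * (b ^ (l + p ^ v + 1)) ^ p ^ v =
        c ^ (p ^ v + 1) * d ^ l * (d ^ (l + p ^ v + 1)) ^ p ^ v := by
      linear_combination congrArg (· ^ (p ^ v + 1)) h₁
    rw [h₂] at h₁'
    exact mul_left_cancel₀ (mul_ne_zero (pow_ne_zero _ hc) (pow_ne_zero _ hd)) h₁'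
  have hbd : b ^ (l + p ^ v + 1) = d ^ (l + p ^ v + 1) := iterateFrobenius_inj F p v hpow
  apply mul_right_cancel₀ (pow_ne_zero (l + p ^ v + 1) hb)
  linear_combination b * d * h₁ - b * c * hbd

theorem monomial_of_linear_pow_eq_on_rootsOfUnity (p : ℕ) [Fact p.Prime] [CharP F p] {ζ : F}
    (hζ : IsPrimitiveRoot ζ k) (hk : 1 < k) (hne : ∀ n, k ≠ p ^ n + 1)
    (hdet : a * d - b * c = 1)
    (h : ∀ x : F, x ^ k = 1 → (a * x + b) ^ k = (c * x + d) ^ k) :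
    (b = 0 ∧ c = 0) ∨ (a = 0 ∧ d = 0) := by
  have : NeZero k := ⟨by omega⟩
  have hk0 : (k : F) ≠ 0 := hζ.neZero'.out
  obtain ⟨v, hv, hchoose⟩ := exists_not_dvd_choose_prime_pow_add_one (p := p) hk
    (by rwa [← CharP.cast_eq_zero_iff F p]) hne
  have h₁ : a * b ^ (k - 1) = c * d ^ (k - 1) := by
    simpa using coeffs_eq_of_linear_pow_eq_on_rootsOfUnity hζ h one_pos hk (by simpa using hk0)
  have h₂ := coeffs_eq_of_linear_pow_eq_on_rootsOfUnity hζ h (Nat.succ_pos _) hv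
    (by rwa [Ne, CharP.cast_eq_zero_iff F p])
  have hk1 : k - 1 ≠ 0 := Nat.sub_ne_zero_of_lt hk
  by_cases ha : a = 0
  · have hc : c ≠ 0 := by
      rintro rfl
      simp [ha] at hdet
    exact .inr ⟨ha, by simpa [ha, hc, hk1] using h₁⟩
  by_cases hb : b = 0
  · have hd : d ≠ 0 := by
      rintro rfl
      simp [hb] at hdet
    exact .inl ⟨hb, by simpa [hb, hd, hk1] using h₁⟩
  have hd : d ≠ 0 := by
    rintro rfl
    simp [ha, hb, hk1] at h₁
  have hsingular := mul_eq_mul_of_coeffs_eq p hv.le ha hb hd h₁ h₂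
  simp [hsingular] at hdet

end RootsOfUnity

section StarterBlock

variable {F : Type} [Field F] {k : ℕ}

theorem embedPt_injective : Function.Injective (embedPt F) := by
  intro x y h
  obtain ⟨r, hr⟩ := (Projectivization.mk_eq_mk_iff' ..).1 h
  have h₀ : r * y = x := by simpa using congrFun hr 0
  have h₁ : r = 1 := by simpa using congrFun hr 1
  rw [← h₀, h₁, one_mul]

theorem smul_embedPt_eq_embedPt_iff (g : SL(2, F)) (x y : F) :
    g • embedPt F x = embedPt F y ↔ g 0 0 * x + g 0 1 = y * (g 1 0 * x + g 1 1) := by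
  have hsmul : g • ![x, 1] = ![g 0 0 * x + g 0 1, g 1 0 * x + g 1 1] := by
    ext i
    fin_cases i <;> simp [Matrix.SpecialLinearGroup.smul_def, Matrix.mulVec, dotProduct]
  rw [embedPt, embedPt, Projectivization.smul_mk, Projectivization.mk_eq_mk_iff']
  simp only [hsmul]
  constructor
  · rintro ⟨r, hr⟩
    have h₀ : r * y = g 0 0 * x + g 0 1 := by simpa using congrFun hr 0
    have h₁ : r = g 1 0 * x + g 1 1 := by simpa using congrFun hr 1
    rw [← h₀, ← h₁, mul_comm]
  · intro h
    refine ⟨g 1 0 * x + g 1 1, ?_⟩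
    rw [h]
    simp [mul_comm y]

theorem designBlocks_eq_orbit (F : Type) [Field F] (k : ℕ) :
    designBlocks F k = orbit SL(2, F) (starterB F k) := by
  ext S
  exact exists_congr fun g ↦ eq_comm

theorem embedPt_mem_starterB {x : F} : embedPt F x ∈ starterB F k ↔ x ^ k = 1 :=
  embedPt_injective.mem_set_image

theorem finite_starterB (hk : 0 < k) : (starterB F k).Finite := by
  refine Set.Finite.image _ ((nthRootsFinset k (1 : F)).finite_toSet.subset fun x hx ↦ ?_)
  simpa [mem_nthRootsFinset hk] using hx

theorem ncard_starterB {ζ : F} (hζ : IsPrimitiveRoot ζ k) (hk : 0 < k) :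
    (starterB F k).ncard = k := by
  have hroots : {x : F | x ^ k = 1} = nthRootsFinset k (1 : F) := by
    ext x
    simp [mem_nthRootsFinset hk]
  rw [starterB, Set.ncard_image_of_injective _ embedPt_injective, hroots, Set.ncard_coe_finset,
    hζ.card_nthRootsFinset]

theorem linear_pow_eq_of_mem_stabilizer_starterB {g : SL(2, F)}
    (hg : g ∈ stabilizer SL(2, F) (starterB F k)) {x : F} (hx : x ^ k = 1) :
    (g 0 0 * x + g 0 1) ^ k = (g 1 0 * x + g 1 1) ^ k := by
  obtain ⟨y, hy, hxy⟩ := (mem_stabilizer_set.1 hg (embedPt F x)).2 (embedPt_mem_starterB.2 hx)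
  rw [(smul_embedPt_eq_embedPt_iff g x y).1 hxy.symm, mul_pow, hy, one_mul]

theorem diag2_smul_embedPt (u : Fˣ) (x : F) :
    diag2 (u : F) u.ne_zero • embedPt F x = embedPt F (u ^ 2 * x) := by
  rw [smul_embedPt_eq_embedPt_iff]
  simp [diag2_coe', pow_two, mul_assoc, mul_comm x]

theorem diag2_mem_stabilizer_starterB_iff (hk : 0 < k) (u : Fˣ) :
    diag2 (u : F) u.ne_zero ∈ stabilizer SL(2, F) (starterB F k) ↔
      u ∈ rootsOfUnity (2 * k) F := by
  rw [mem_rootsOfUnity', pow_mul]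
  constructor
  · intro hu
    have hone := (mem_stabilizer_set.1 hu (embedPt F 1)).2 (embedPt_mem_starterB.2 (one_pow k))
    rwa [diag2_smul_embedPt, embedPt_mem_starterB, mul_one] at hone
  · rw [mem_stabilizer_set' (finite_starterB hk)]
    rintro hu _ ⟨x, hx, rfl⟩
    rw [diag2_smul_embedPt, embedPt_mem_starterB, mul_pow, hu, hx, one_mul]

theorem diag2_units_injective : Function.Injective fun u : Fˣ ↦ diag2 (u : F) u.ne_zero := by
  intro u v h
  ext
  simpa [diag2_coe'] using congrArg (fun g : SL(2, F) ↦ g 0 0) h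

theorem exists_eq_diag2 {g : SL(2, F)} (hb : g 0 1 = 0) (hc : g 1 0 = 0) :
    ∃ u : Fˣ, g = diag2 (u : F) u.ne_zero := by
  have hdet : g 0 0 * g 1 1 = 1 := by
    have hdet := g.det_coe
    rwa [Matrix.det_fin_two, hb, zero_mul, sub_zero] at hdet
  refine ⟨Units.mkOfMulEqOne _ _ hdet, Subtype.ext ?_⟩
  refine (Matrix.eta_fin_two g.1).trans ?_
  simp [diag2_coe', hb, hc, eq_inv_of_mul_eq_one_right hdet]

variable (F) in
/-- The matrices `diag(u, u⁻¹)` of `SL(2, F)` with `u` an `n`-th root of unity. -/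
def diagonalRoots (n : ℕ) : Set SL(2, F) :=
  (fun u : Fˣ ↦ diag2 (u : F) u.ne_zero) '' rootsOfUnity n F

theorem ncard_diagonalRoots {n : ℕ} (hn : 0 < n) {ζ : F} (hζ : IsPrimitiveRoot ζ n) :
    (diagonalRoots F n).ncard = n := by
  have : NeZero n := ⟨hn.ne'⟩
  rw [diagonalRoots, Set.ncard_image_of_injective _ diag2_units_injective]
  exact hζ.card_rootsOfUnity

/-- The matrix `!![0, i; i, 0]`, for a square root `i` of `-1`: the lift to `SL(2, F)` of the
inversion `x ↦ x⁻¹` of the projective line. -/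
def inversionSL (i : F) (hi : i * i = -1) : SL(2, F) :=
  ⟨!![0, i; i, 0], by simp [Matrix.det_fin_two, hi]⟩

variable {i : F} (hi : i * i = -1)

theorem coe_inversionSL : (inversionSL i hi : Matrix (Fin 2) (Fin 2) F) = !![0, i; i, 0] := rfl

theorem inversionSL_mem_stabilizer_starterB (hk : 0 < k) :
    inversionSL i hi ∈ stabilizer SL(2, F) (starterB F k) := by
  rw [mem_stabilizer_set' (finite_starterB hk)]
  rintro _ ⟨x, hx, rfl⟩
  have hx0 : x ≠ 0 := ne_zero_pow hk.ne' (by rw [hx]; exact one_ne_zero)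
  have hinv : inversionSL i hi • embedPt F x = embedPt F x⁻¹ := by
    rw [smul_embedPt_eq_embedPt_iff]
    simp [coe_inversionSL, mul_comm i, hx0]
  rw [hinv, embedPt_mem_starterB, inv_pow, hx, inv_one]

theorem exists_eq_diag2_mul_inversionSL {g : SL(2, F)} (ha : g 0 0 = 0) (hd : g 1 1 = 0) :
    ∃ u : Fˣ, g = diag2 (u : F) u.ne_zero * inversionSL i hi := by
  have hcoe : ((g * (inversionSL i hi)⁻¹ : SL(2, F)) : Matrix (Fin 2) (Fin 2) F) =
      g.1 * !![0, -i; -i, 0] := by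
    rw [Matrix.SpecialLinearGroup.coe_mul, Matrix.SpecialLinearGroup.coe_inv, coe_inversionSL,
      Matrix.adjugate_fin_two_of]
  obtain ⟨u, hu⟩ := exists_eq_diag2 (g := g * (inversionSL i hi)⁻¹)
    (by simp [hcoe, Matrix.mul_apply, ha]) (by simp [hcoe, Matrix.mul_apply, hd])
  exact ⟨u, by rw [← hu, inv_mul_cancel_right]⟩

theorem coe_stabilizer_starterB_eq_union (p : ℕ) [Fact p.Prime] [CharP F p] {ζ : F}
    (hζ : IsPrimitiveRoot ζ k) (hk : 1 < k) (hne : ∀ n, k ≠ p ^ n + 1) :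
    (stabilizer SL(2, F) (starterB F k) : Set SL(2, F)) =
      diagonalRoots F (2 * k) ∪ (· * inversionSL i hi) '' diagonalRoots F (2 * k) := by
  have hk0 : 0 < k := by omega
  have hinv := inversionSL_mem_stabilizer_starterB hi hk0
  ext g
  constructor
  · intro hg
    have hdet : g 0 0 * g 1 1 - g 0 1 * g 1 0 = 1 := by
      rw [← Matrix.det_fin_two, g.det_coe]
    rcases monomial_of_linear_pow_eq_on_rootsOfUnity p hζ hk hne hdet
      (fun _ ↦ linear_pow_eq_of_mem_stabilizer_starterB hg) with ⟨hb, hc⟩ | ⟨ha, hd⟩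
    · obtain ⟨u, rfl⟩ := exists_eq_diag2 hb hc
      exact .inl ⟨u, (diag2_mem_stabilizer_starterB_iff hk0 u).1 hg, rfl⟩
    · obtain ⟨u, rfl⟩ := exists_eq_diag2_mul_inversionSL hi ha hd
      have hu := (Subgroup.mul_mem_cancel_right _ hinv).1 hg
      exact .inr ⟨_, ⟨u, (diag2_mem_stabilizer_starterB_iff hk0 u).1 hu, rfl⟩, rfl⟩
  · rintro (⟨u, hu, rfl⟩ | ⟨_, ⟨u, hu, rfl⟩, rfl⟩)
    · exact (diag2_mem_stabilizer_starterB_iff hk0 u).2 hu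
    · exact mul_mem ((diag2_mem_stabilizer_starterB_iff hk0 u).2 hu) hinv

theorem disjoint_diagonalRoots_image_mul_inversionSL (n : ℕ) :
    Disjoint (diagonalRoots F n) ((· * inversionSL i hi) '' diagonalRoots F n) := by
  rw [Set.disjoint_left]
  rintro _ ⟨u, -, rfl⟩ ⟨_, ⟨w, -, rfl⟩, h⟩
  have h00 : (0 : F) = u := by
    simpa [diag2_coe', coe_inversionSL] using congrArg (fun g : SL(2, F) ↦ g 0 0) h
  exact u.ne_zero h00.symm

theorem card_stabilizer_starterB (p : ℕ) [Fact p.Prime] [CharP F p] {ζ : F}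
    (hζ : IsPrimitiveRoot ζ (2 * k)) (hk : 1 < k) (hne : ∀ n, k ≠ p ^ n + 1)
    (hsq : IsSquare (-1 : F)) :
    Nat.card (stabilizer SL(2, F) (starterB F k)) = 4 * k := by
  obtain ⟨i, hi⟩ := hsq
  have hcard : (diagonalRoots F (2 * k)).ncard = 2 * k := ncard_diagonalRoots (by omega) hζ
  have hfinite : (diagonalRoots F (2 * k)).Finite := Set.finite_of_ncard_pos (by omega)
  have hζk : IsPrimitiveRoot (ζ ^ 2) k := hζ.pow (by omega) rfl
  rw [← SetLike.coe_sort_coe, Nat.card_coe_set_eq,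
    coe_stabilizer_starterB_eq_union hi.symm p hζk hk hne,
    Set.ncard_union_eq (disjoint_diagonalRoots_image_mul_inversionSL ..) hfinite (hfinite.image _),
    Set.ncard_image_of_injective _ (mul_left_injective _), hcard]
  ring

end StarterBlock

theorem choose_three_mul_six (n : ℕ) : n.choose 3 * 6 = n * (n - 1) * (n - 2) := by
  calc n.choose 3 * 6 = n.descFactorial 3 := by
        rw [Nat.descFactorial_eq_factorial_mul_choose, mul_comm]
        rfl
    _ = n * (n - 1) * (n - 2) := by
        simp only [Nat.descFactorial_succ, Nat.descFactorial_zero, Nat.sub_zero]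
        ring

theorem four_mul_eq_of_choose_three_mul_eq {q k lam : ℕ} (hq : 1 < q) (hk : 0 < k)
    (h : (q + 1).choose 3 * lam * (4 * k) = (q + 1) * q * (q - 1) * k.choose 3) :
    4 * lam = (k - 1) * (k - 2) := by
  have hqchoose : (q + 1).choose 3 * 6 = (q + 1) * q * (q - 1) := choose_three_mul_six (q + 1)
  have hpos : 0 < (q + 1) * q * (q - 1) * k := by
    have : 0 < q - 1 := Nat.sub_pos_of_lt hq
    positivity
  apply Nat.eq_of_mul_eq_mul_left hpos
  calc (q + 1) * q * (q - 1) * k * (4 * lam)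
      = (q + 1).choose 3 * lam * (4 * k) * 6 := by rw [← hqchoose]; ring
    _ = (q + 1) * q * (q - 1) * (k.choose 3 * 6) := by rw [h]; ring
    _ = (q + 1) * q * (q - 1) * k * ((k - 1) * (k - 2)) := by rw [choose_three_mul_six]; ring

theorem ne_pow_add_one_of_lt {k p : ℕ} (hk : 2 < k) (hkp : k < p) (n : ℕ) : k ≠ p ^ n + 1 := by
  rcases eq_or_ne n 0 with rfl | hn
  · simpa using hk.ne'
  · have := Nat.le_self_pow hn p
    omega

theorem stmt_1_general {F : Type} [Field F] [Finite F] {k lam : ℕ} (hq4 : Nat.card F % 4 = 1)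
    (hkdvd : 2 * k ∣ Nat.card F - 1) (hk : 1 < k) (hkp : ∀ n, k ≠ ringChar F ^ n + 1)
    (hdes : isThreeDesign F k lam) : 4 * lam = (k - 1) * (k - 2) := by
  have := Fintype.ofFinite F
  have : Fact (ringChar F).Prime := ⟨CharP.char_is_prime F _⟩
  have hsq : IsSquare (-1 : F) := by
    rw [FiniteField.isSquare_neg_one_iff, ← Nat.card_eq_fintype_card, hq4]
    norm_num
  obtain ⟨ζ, hζ⟩ := exists_isPrimitiveRoot_of_dvd_card_sub_one F hkdvd
  have hcount := choose_mul_card_stabilizer_eq_card_mul_choose SL(2, F)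
    (designBlocks_eq_orbit F k ▸ hdes.2)
  rw [Projectivization.card_of_finrank_two F (Fin 2 → F) (by simp),
    card_stabilizer_starterB (ringChar F) hζ hk hkp hsq, card_specialLinearGroup_fin_two,
    ncard_starterB (hζ.pow (by omega) rfl) (by omega)] at hcount
  exact four_mul_eq_of_choose_three_mul_eq Finite.one_lt_card (by omega) hcount

/-- Theorem 2.5(ii): if `e = (q-1)/k` is even, `k` is less than the characteristic,
and `(q,k)` gives a `3-(q+1, k, lam)` design, then `lam = (k-1)(k-2)/4`. -/
theorem stmt_1 (F : Type) [Field F] [Fintype F] [DecidableEq F]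
    (q k lam : ℕ) (hq : Fintype.card F = q) (hqodd : Odd q) (hq4 : q % 4 = 1)
    (hkdvd : k ∣ q - 1) (hk3 : 3 < k) (hkq : k < q - 1)
    (he : Even ((q - 1) / k)) (hkp : k < ringChar F)
    (hdes : isThreeDesign F k lam) :
    4 * lam = (k - 1) * (k - 2) := by
  subst hq
  rw [← Nat.card_eq_fintype_card] at hq4 hkdvd he
  exact stmt_1_general hq4 (mul_comm k 2 ▸ Nat.mul_dvd_of_dvd_div hkdvd he.two_dvd) (by omega)
    (ne_pow_add_one_of_lt (by omega) hkp) hdes
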